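/- The ℂ-linear span V_Ξ of the ten functions Ξ₆[δ₁], …, Ξ₆[δ₁₀] equals the ℂ-linear span of the five functions τ ↦ (∂I₄/∂xᵢ)(P₀(τ),…,P₄(τ)) for i = 0,…,4, and this common span has dimension exactly 5. -/

import Mathlib

open scoped BigOperators

namespace TwoLoop

/-- 2×2 complex matrices. -/
abbrev Mat2 := Matrix (Fin 2) (Fin 2) ℂ

/-- The genus-2 Siegel upper half space: symmetric 2×2 complex matrices with
positive definite imaginary part. -/
def SiegelH2 : Set Mat2 := {τ | τ.transpose = τ ∧ (τ.map Complex.im).PosDef}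

/-- A (half-integer) theta characteristic `[a;b]`, recorded by its rows `a, b ∈ {0,1}²`. -/
abbrev Char := (Fin 2 → ℤ) × (Fin 2 → ℤ)

/-- The theta constant `θ[a;b](τ) = Σ_{n ∈ ℤ²} exp(πi (n+a/2)ᵀ τ (n+a/2) + πi (n+a/2)·b)`. -/
noncomputable def theta (κ : Char) (τ : Mat2) : ℂ :=
  ∑' n : Fin 2 → ℤ,
    Complex.exp ((Real.pi : ℂ) * Complex.I *
      ((∑ i, ∑ j, ((n i : ℂ) + (κ.1 i : ℂ) / 2) * τ i j * ((n j : ℂ) + (κ.1 j : ℂ) / 2))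
        + ∑ i, ((n i : ℂ) + (κ.1 i : ℂ) / 2) * (κ.2 i : ℂ)))

/-- The ten even characteristics δ₁,…,δ₁₀. -/
def δev : Fin 10 → Char :=
  ![(![0,0], ![0,0]), (![0,0], ![0,1]), (![0,0], ![1,0]), (![0,0], ![1,1]),
    (![0,1], ![0,0]), (![0,1], ![1,0]), (![1,0], ![0,0]), (![1,0], ![0,1]),
    (![1,1], ![0,0]), (![1,1], ![1,1])]

/-- The six odd characteristics ν₁,…,ν₆. -/
def νodd : Fin 6 → Char :=
  ![(![0,1], ![0,1]), (![1,0], ![1,0]), (![0,1], ![1,1]),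
    (![1,0], ![1,1]), (![1,1], ![0,1]), (![1,1], ![1,0])]

/-- `Θ[ε](τ) = θ[ε;0](2τ)`. -/
noncomputable def Θf (ε : Fin 2 → ℤ) (τ : Mat2) : ℂ := theta (ε, ![0,0]) ((2 : ℂ) • τ)

noncomputable def P0 (τ : Mat2) : ℂ :=
  Θf ![0,0] τ ^ 4 + Θf ![0,1] τ ^ 4 + Θf ![1,0] τ ^ 4 + Θf ![1,1] τ ^ 4
noncomputable def P1 (τ : Mat2) : ℂ :=
  2 * (Θf ![0,0] τ ^ 2 * Θf ![0,1] τ ^ 2 + Θf ![1,0] τ ^ 2 * Θf ![1,1] τ ^ 2)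
noncomputable def P2 (τ : Mat2) : ℂ :=
  2 * (Θf ![0,0] τ ^ 2 * Θf ![1,0] τ ^ 2 + Θf ![0,1] τ ^ 2 * Θf ![1,1] τ ^ 2)
noncomputable def P3 (τ : Mat2) : ℂ :=
  2 * (Θf ![0,0] τ ^ 2 * Θf ![1,1] τ ^ 2 + Θf ![0,1] τ ^ 2 * Θf ![1,0] τ ^ 2)
noncomputable def P4 (τ : Mat2) : ℂ :=
  4 * (Θf ![0,0] τ * Θf ![0,1] τ * Θf ![1,0] τ * Θf ![1,1] τ)

/-- The vector `(P₀,…,P₄)`. -/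
noncomputable def Pv : Fin 5 → Mat2 → ℂ := ![P0, P1, P2, P3, P4]

open MvPolynomial in
/-- The Igusa quartic as a polynomial in `x₀,…,x₄`. -/
noncomputable def I4poly : MvPolynomial (Fin 5) ℂ :=
  X 4 ^ 4 + X 4 ^ 2 * X 0 ^ 2 - X 4 ^ 2 * X 1 ^ 2 - X 4 ^ 2 * X 2 ^ 2 - X 4 ^ 2 * X 3 ^ 2
    + X 1 ^ 2 * X 2 ^ 2 + X 1 ^ 2 * X 3 ^ 2 + X 2 ^ 2 * X 3 ^ 2
    - 2 * (X 0 * X 1 * X 2 * X 3)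

/-- The signature `⟨κ|λ⟩ = exp(πi(a_κ·b_λ − b_κ·a_λ))`. -/
noncomputable def sig (κ lam : Char) : ℂ :=
  Complex.exp ((Real.pi : ℂ) * Complex.I *
    (((∑ i, κ.1 i * lam.2 i : ℤ) : ℂ) - ((∑ i, κ.2 i * lam.1 i : ℤ) : ℂ)))

/-- Componentwise mod-2 sum of characteristics. -/
def addChar (κ lam : Char) : Char :=
  (fun i => (κ.1 i + lam.1 i) % 2, fun i => (κ.2 i + lam.2 i) % 2)

/-- For each even characteristic `δ_d`, the ordering `(k₁,…,k₆)` of `{1,…,6}` (0-indexed) whose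
first three entries form the triad of odd characteristics with `δ_d = ν_{k₁}+ν_{k₂}+ν_{k₃}`
and whose last three are the complementary indices. -/
def triad : Fin 10 → Fin 6 → Fin 6 :=
  ![![0,3,5,1,2,4], ![0,1,5,2,3,4], ![0,1,4,2,3,5], ![0,3,4,1,2,5], ![0,1,3,2,4,5],
    ![0,4,5,1,2,3], ![0,1,2,3,4,5], ![0,2,3,1,4,5], ![0,2,5,1,3,4], ![0,2,4,1,3,5]]

/-- D'Hoker–Phong's `Ξ₆[δ]`. -/
noncomputable def Xi6 (d : Fin 10) (τ : Mat2) : ℂ :=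
  ∑ i : Fin 3, ∑ j : Fin 3,
    if i < j then
      sig (νodd (triad d (Fin.castLE (by norm_num) i))) (νodd (triad d (Fin.castLE (by norm_num) j))) *
        ∏ m : Fin 3,
          theta (addChar (addChar (νodd (triad d (Fin.castLE (by norm_num) i)))
              (νodd (triad d (Fin.castLE (by norm_num) j))))
            (νodd (triad d (⟨m.1 + 3, by omega⟩ : Fin 6)))) τ ^ 4
    else 0

/-- The formal derivative `∂I₄/∂θ⁴[δ]` of the Igusa quartic with respect to the ten fourth
powers of the even theta constants, regarded as independent variables. -/
noncomputable def Dd (d : Fin 10) (τ : Mat2) : ℂ :=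
  (1 / 48 : ℂ) *
    (theta (δev d) τ ^ 4 * (∑ d' : Fin 10, theta (δev d') τ ^ 8) - 4 * theta (δev d) τ ^ 12)

/-- `f_δ = 2Ξ₆[δ] − ∂I₄/∂θ⁴[δ]`. -/
noncomputable def fδ (d : Fin 10) (τ : Mat2) : ℂ := 2 * Xi6 d τ - Dd d τ

/-- `Ψ₆`, the weight-6 modular form. -/
noncomputable def Ψ6 (τ : Mat2) : ℂ :=
  P0 τ ^ 3 - 9 * P0 τ * (P1 τ ^ 2 + P2 τ ^ 2 + P3 τ ^ 2 - 4 * P4 τ ^ 2)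
    + 54 * (P1 τ * P2 τ * P3 τ)

/-- `Ψ₁₀`, the weight-10 modular form. -/
noncomputable def Ψ10 (τ : Mat2) : ℂ := ∏ d : Fin 10, theta (δev d) τ ^ 2

/-- A characteristic is even when `a·b` is even. -/
def IsEvenChar (κ : Char) : Prop := (∑ i, κ.1 i * κ.2 i) % 2 = 0

/-- A characteristic is odd when `a·b` is odd. -/
def IsOddChar (κ : Char) : Prop := (∑ i, κ.1 i * κ.2 i) % 2 = 1

/-- The formal partial derivative `∂I₄/∂xᵢ` evaluated at `(P₀(τ),…,P₄(τ))`. -/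
noncomputable def dI4 (i : Fin 5) (τ : Mat2) : ℂ :=
  MvPolynomial.eval (fun k => Pv k τ) (MvPolynomial.pderiv i I4poly)

/-- The general term of the theta series. -/
noncomputable def tm (κ : Char) (τ : Mat2) (n : Fin 2 → ℤ) : ℂ :=
    Complex.exp ((Real.pi : ℂ) * Complex.I *
      ((∑ i, ∑ j, ((n i : ℂ) + (κ.1 i : ℂ) / 2) * τ i j * ((n j : ℂ) + (κ.1 j : ℂ) / 2))
        + ∑ i, ((n i : ℂ) + (κ.1 i : ℂ) / 2) * (κ.2 i : ℂ)))

lemma theta_eq (κ : Char) (τ : Mat2) : theta κ τ = ∑' n, tm κ τ n := rfl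

lemma mem_iff {τ : Mat2} (h : τ ∈ SiegelH2) :
    τ 1 0 = τ 0 1 ∧ 0 < (τ 0 0).im ∧ 0 < (τ 0 0).im * (τ 1 1).im - (τ 0 1).im ^ 2 := by
  obtain ⟨h1, h2⟩ := h
  have hs : τ 1 0 = τ 0 1 := by
    have := congrFun (congrFun h1 0) 1
    simpa using this
  refine ⟨hs, ?_, ?_⟩
  · have := h2.diag_pos (i := 0)
    simpa using this
  · have := h2.det_pos
    rw [Matrix.det_fin_two] at this
    simp [hs] at this
    nlinarith

lemma mem_of {τ : Mat2} (h : τ 1 0 = τ 0 1) (h0 : 0 < (τ 0 0).im)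
    (h1 : 0 < (τ 0 0).im * (τ 1 1).im - (τ 0 1).im ^ 2) : τ ∈ SiegelH2 := by
  refine ⟨?_, ?_⟩
  · ext i j
    fin_cases i <;> fin_cases j <;> simp [h]
  · refine Matrix.PosDef.of_dotProduct_mulVec_pos ?_ ?_
    · ext i j
      fin_cases i <;> fin_cases j <;> simp [h]
    · intro x hx
      simp only [dotProduct, Matrix.mulVec, Fin.sum_univ_two, Matrix.map_apply, h]
      simp only [Pi.star_apply, star_trivial]
      have key : 0 < (τ 0 0).im * (x 0 * ((τ 0 0).im * x 0 + (τ 0 1).im * x 1) +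
          x 1 * ((τ 0 1).im * x 0 + (τ 1 1).im * x 1)) := by
        have e : (τ 0 0).im * (x 0 * ((τ 0 0).im * x 0 + (τ 0 1).im * x 1) +
          x 1 * ((τ 0 1).im * x 0 + (τ 1 1).im * x 1)) =
          ((τ 0 0).im * x 0 + (τ 0 1).im * x 1) ^ 2 +
          ((τ 0 0).im * (τ 1 1).im - (τ 0 1).im ^ 2) * x 1 ^ 2 := by ring
        rw [e]
        by_cases hx1 : x 1 = 0
        · have hx0 : x 0 ≠ 0 := by
            intro h0
            apply hx
            ext i
            fin_cases i <;> simp [h0, hx1]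
          rw [hx1]
          have : 0 < ((τ 0 0).im * x 0) ^ 2 := by positivity
          simpa using this
        · positivity
      exact (mul_pos_iff_of_pos_left h0).1 key

lemma quad_bound {p q r : ℝ} (hp : 0 < p) (hd : 0 < p * r - q ^ 2) :
    ∃ c : ℝ, 0 < c ∧ ∀ x y : ℝ, c * (x ^ 2 + y ^ 2) ≤ p * x ^ 2 + 2 * q * x * y + r * y ^ 2 := by
  have hr : 0 < r := by
    have : 0 < p * r := by nlinarith [sq_nonneg q]
    exact (mul_pos_iff_of_pos_left hp).1 this
  refine ⟨(p * r - q ^ 2) / (p + r), by positivity, fun x y => ?_⟩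
  set c := (p * r - q ^ 2) / (p + r) with hc
  have hcm : c * (p + r) = p * r - q ^ 2 := by rw [hc]; field_simp
  have hpc : 0 < p - c := by
    have : 0 < (p - c) * (p + r) := by nlinarith [sq_nonneg q, mul_pos hp hp]
    exact (mul_pos_iff_of_pos_right (by positivity)).1 this
  have : 0 ≤ (p - c) * (p * x ^ 2 + 2 * q * x * y + r * y ^ 2 - c * (x ^ 2 + y ^ 2)) := by
    have e : (p - c) * (p * x ^ 2 + 2 * q * x * y + r * y ^ 2 - c * (x ^ 2 + y ^ 2)) =
      ((p - c) * x + q * y) ^ 2 + c ^ 2 * y ^ 2 := by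
      linear_combination (-y ^ 2) * hcm
    rw [e]; positivity
  have := nonneg_of_mul_nonneg_right this hpc
  linarith

lemma norm_tm {τ : Mat2} (h : τ ∈ SiegelH2) (κ : Char) (n : Fin 2 → ℤ) :
    ‖tm κ τ n‖ = Real.exp (-Real.pi * ((τ 0 0).im * (n 0 + κ.1 0 / 2 : ℝ) ^ 2
      + 2 * (τ 0 1).im * (n 0 + κ.1 0 / 2 : ℝ) * (n 1 + κ.1 1 / 2 : ℝ)
      + (τ 1 1).im * (n 1 + κ.1 1 / 2 : ℝ) ^ 2)) := by
  obtain ⟨hs, -, -⟩ := mem_iff h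
  rw [tm, Complex.norm_exp]
  congr 1
  have e : ∀ i : Fin 2, ((n i : ℂ) + (κ.1 i : ℂ) / 2) = ((n i + κ.1 i / 2 : ℝ) : ℂ) := by
    intro i; push_cast; rfl
  have e2 : ∀ i : Fin 2, (κ.2 i : ℂ) = ((κ.2 i : ℝ) : ℂ) := by
    intro i; push_cast; rfl
  simp only [e, e2, Fin.sum_univ_two, hs, mul_assoc, Complex.re_ofReal_mul, Complex.I_mul_re,
    Complex.add_im, Complex.im_ofReal_mul, Complex.im_mul_ofReal, Complex.ofReal_im]
  ring

lemma summable_one (c : ℝ) (hc : 0 < c) (a : ℤ) :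
    Summable fun n : ℤ => Real.exp (-Real.pi * (c * (n + a / 2 : ℝ) ^ 2)) := by
  have h := (summable_jacobiTheta₂_term_iff (Complex.I * (c * a / 2 : ℝ)) (Complex.I * (c : ℝ))).2
    (by simpa using hc)
  have h2 := h.norm.mul_right (Real.exp (-Real.pi * (c * (a / 2 : ℝ) ^ 2)))
  refine h2.congr fun n => ?_
  rw [norm_jacobiTheta₂_term, ← Real.exp_add]
  congr 1
  simp
  ring

lemma summable_tm {τ : Mat2} (h : τ ∈ SiegelH2) (κ : Char) : Summable fun n => ‖tm κ τ n‖ := by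
  obtain ⟨hs, h0, h1⟩ := mem_iff h
  obtain ⟨c, hc, hb⟩ := quad_bound h0 h1
  have hp := (summable_one c hc (κ.1 0)).mul_of_nonneg (summable_one c hc (κ.1 1))
    (fun _ => (Real.exp_pos _).le) (fun _ => (Real.exp_pos _).le)
  have hq := (finTwoArrowEquiv ℤ).summable_iff.2 hp
  refine Summable.of_nonneg_of_le (fun _ => norm_nonneg _) (fun n => ?_) hq
  rw [norm_tm h]
  simp only [Function.comp, finTwoArrowEquiv_apply]
  rw [← Real.exp_add, Real.exp_le_exp]
  have := mul_le_mul_of_nonneg_left (hb (n 0 + κ.1 0 / 2 : ℝ) (n 1 + κ.1 1 / 2 : ℝ))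
    Real.pi_pos.le
  change _ ≤ -Real.pi * (c * (n 0 + κ.1 0 / 2 : ℝ) ^ 2) + -Real.pi * (c * (n 1 + κ.1 1 / 2 : ℝ) ^ 2)
  linarith

/-- The change of summation variables `m + n = 2p + ε`, `m - n = 2q + ε`. -/
def cov : (Fin 2 × Fin 2) × ((Fin 2 → ℤ) × (Fin 2 → ℤ)) ≃ (Fin 2 → ℤ) × (Fin 2 → ℤ) where
  toFun x := (![x.2.1 0 + x.2.2 0 + (x.1.1.val : ℤ), x.2.1 1 + x.2.2 1 + (x.1.2.val : ℤ)],
    ![x.2.1 0 - x.2.2 0, x.2.1 1 - x.2.2 1])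
  invFun y := ((⟨((y.1 0 + y.2 0) % 2).toNat, by omega⟩, ⟨((y.1 1 + y.2 1) % 2).toNat, by omega⟩),
    (![(y.1 0 + y.2 0) / 2, (y.1 1 + y.2 1) / 2], ![(y.1 0 - y.2 0) / 2, (y.1 1 - y.2 1) / 2]))
  left_inv := by
    rintro ⟨⟨e0, e1⟩, p, q⟩
    refine Prod.ext (Prod.ext (Fin.ext ?_) (Fin.ext ?_)) (Prod.ext ?_ ?_)
    · simp; omega
    · simp; omega
    · ext i; fin_cases i <;> simp <;> omega
    · ext i; fin_cases i <;> simp <;> omega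
  right_inv := by
    rintro ⟨m, n⟩
    refine Prod.ext ?_ ?_
    · ext i; fin_cases i <;> simp <;> omega
    · ext i; fin_cases i <;> simp <;> omega

lemma two_smul_mem {τ : Mat2} (h : τ ∈ SiegelH2) : (2 : ℂ) • τ ∈ SiegelH2 := by
  obtain ⟨hs, h0, h1⟩ := mem_iff h
  apply mem_of
  · simp [hs]
  · simpa using h0
  · simp; nlinarith

lemma exp_sign (k : ℤ) : Complex.exp (Real.pi * Complex.I * k) = (-1) ^ k := by
  rw [mul_comm, Complex.exp_int_mul, Complex.exp_pi_mul_I]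

lemma tm_mul {τ : Mat2} (h : τ ∈ SiegelH2) (a b : Fin 2 → ℤ) (e : Fin 2 × Fin 2)
    (p q : Fin 2 → ℤ) :
    tm (a, b) τ (cov (e, (p, q))).1 * tm (a, b) τ (cov (e, (p, q))).2 =
      (-1) ^ (((e.1.val : ℤ) + a 0) * b 0 + ((e.2.val : ℤ) + a 1) * b 1) *
      (tm (![(e.1.val : ℤ) + a 0, (e.2.val : ℤ) + a 1], ![0, 0]) ((2 : ℂ) • τ) p *
        tm (![(e.1.val : ℤ), (e.2.val : ℤ)], ![0, 0]) ((2 : ℂ) • τ) q) := by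
  obtain ⟨hs, -, -⟩ := mem_iff h
  have h2 : Complex.exp (Real.pi * Complex.I * ((2 * (p 0 * b 0 + p 1 * b 1) : ℤ) : ℂ)) = 1 := by
    rw [exp_sign, zpow_mul]; simp
  rw [← exp_sign, ← one_mul (Complex.exp _ * _), ← h2]
  simp only [tm, ← Complex.exp_add]
  congr 1
  simp [cov, Fin.sum_univ_two, hs]
  ring

lemma theta_sq {τ : Mat2} (h : τ ∈ SiegelH2) (a b : Fin 2 → ℤ) :
    theta (a, b) τ ^ 2 = ∑ e : Fin 2 × Fin 2,
      (-1) ^ (((e.1.val : ℤ) + a 0) * b 0 + ((e.2.val : ℤ) + a 1) * b 1) *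
      (Θf ![(e.1.val : ℤ) + a 0, (e.2.val : ℤ) + a 1] τ * Θf ![(e.1.val : ℤ), (e.2.val : ℤ)] τ) := by
  have hs := summable_tm h (a, b)
  have h2 := two_smul_mem h
  rw [pow_two, theta_eq, tsum_mul_tsum_of_summable_norm hs hs, ← cov.tsum_eq]
  have hS : Summable fun x : (Fin 2 × Fin 2) × ((Fin 2 → ℤ) × (Fin 2 → ℤ)) =>
      tm (a, b) τ (cov x).1 * tm (a, b) τ (cov x).2 :=
    cov.summable_iff.2 (summable_mul_of_summable_norm hs hs)
  rw [hS.tsum_prod, tsum_fintype]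
  refine Finset.sum_congr rfl fun e _ => ?_
  simp only [tm_mul h]
  rw [tsum_mul_left, Θf, Θf, theta_eq, theta_eq,
    tsum_mul_tsum_of_summable_norm (summable_tm h2 _) (summable_tm h2 _)]

lemma theta_shift (κ : Char) (τ : Mat2) (a : Fin 2 → ℤ) (k : Fin 2 → ℤ) (ha : ∀ i, κ.1 i = a i + 2 * k i)
    (hb : κ.2 = ![0, 0]) :
    theta κ τ = theta (a, ![0, 0]) τ := by
  rw [theta_eq, theta_eq, ← (Equiv.addRight k).tsum_eq (tm (a, ![0, 0]) τ)]
  refine tsum_congr fun n => ?_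
  simp only [tm, hb, ha, Equiv.coe_addRight, Pi.add_apply]
  congr 1
  push_cast
  simp only [Fin.sum_univ_two]
  simp
  ring

lemma Θf_shift (a a' : Fin 2 → ℤ) (τ : Mat2) (k : Fin 2 → ℤ) (ha : ∀ i, a' i = a i + 2 * k i) :
    Θf a' τ = Θf a τ := theta_shift _ _ _ k ha rfl

lemma Θ20 (τ : Mat2) : Θf ![2, 0] τ = Θf ![0, 0] τ :=
  Θf_shift _ _ _ ![1, 0] (by decide)
lemma Θ02 (τ : Mat2) : Θf ![0, 2] τ = Θf ![0, 0] τ :=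
  Θf_shift _ _ _ ![0, 1] (by decide)
lemma Θ22 (τ : Mat2) : Θf ![2, 2] τ = Θf ![0, 0] τ :=
  Θf_shift _ _ _ ![1, 1] (by decide)
lemma Θ21 (τ : Mat2) : Θf ![2, 1] τ = Θf ![0, 1] τ :=
  Θf_shift _ _ _ ![1, 0] (by decide)
lemma Θ12 (τ : Mat2) : Θf ![1, 2] τ = Θf ![1, 0] τ :=
  Θf_shift _ _ _ ![0, 1] (by decide)

/-- The ten fourth powers of even theta constants as linear forms in the `P`'s. -/
lemma theta_four {τ : Mat2} (h : τ ∈ SiegelH2) (d : Fin 10) : theta (δev d) τ ^ 4 =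
    (![P0 τ + P1 τ + P2 τ + P3 τ, P0 τ - P1 τ + P2 τ - P3 τ, P0 τ + P1 τ - P2 τ - P3 τ,
      P0 τ - P1 τ - P2 τ + P3 τ, 2 * P1 τ + 2 * P4 τ, 2 * P1 τ - 2 * P4 τ,
      2 * P2 τ + 2 * P4 τ, 2 * P2 τ - 2 * P4 τ, 2 * P3 τ + 2 * P4 τ, 2 * P3 τ - 2 * P4 τ] :
      Fin 10 → ℂ) d := by
  have e4 : theta (δev d) τ ^ 4 = (theta ((δev d).1, (δev d).2) τ ^ 2) ^ 2 := by ring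
  rw [e4, theta_sq h]
  fin_cases d <;>
  · simp [δev, Fintype.sum_prod_type, Fin.sum_univ_two, Θ20, Θ02, Θ22, Θ21, Θ12, P0, P1, P2, P3, P4,
      zpow_add₀]
    ring

lemma dI4_eq (i : Fin 5) (τ : Mat2) : dI4 i τ =
    (![2 * (P4 τ ^ 2 * P0 τ - P1 τ * P2 τ * P3 τ),
      2 * (P1 τ * P2 τ ^ 2 + P1 τ * P3 τ ^ 2 - P4 τ ^ 2 * P1 τ - P0 τ * P2 τ * P3 τ),
      2 * (P2 τ * P1 τ ^ 2 + P2 τ * P3 τ ^ 2 - P4 τ ^ 2 * P2 τ - P0 τ * P1 τ * P3 τ),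
      2 * (P3 τ * P1 τ ^ 2 + P3 τ * P2 τ ^ 2 - P4 τ ^ 2 * P3 τ - P0 τ * P1 τ * P2 τ),
      4 * P4 τ ^ 3 + 2 * P4 τ * (P0 τ ^ 2 - P1 τ ^ 2 - P2 τ ^ 2 - P3 τ ^ 2)] : Fin 5 → ℂ) i := by
  have h2 : ∀ i : Fin 5, MvPolynomial.pderiv i (2 : MvPolynomial (Fin 5) ℂ) = 0 := by
    intro i
    exact MvPolynomial.pderiv_C (R := ℂ) (σ := Fin 5) (a := 2) (i := i)
  fin_cases i <;>
  · simp [dI4, I4poly, MvPolynomial.pderiv_mul, MvPolynomial.pderiv_pow, MvPolynomial.pderiv_X,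
      h2, Pi.single_apply, Pv]
    ring

/-- The sign of a pair of characteristics, in computable form. -/
def sgn (κ lam : Char) : ℤ := (-1) ^ ((∑ i, κ.1 i * lam.2 i) - (∑ i, κ.2 i * lam.1 i)).natAbs

lemma sig_eq (κ lam : Char) : sig κ lam = (sgn κ lam : ℂ) := by
  rw [sig, ← Int.cast_sub, exp_sign, sgn]
  push_cast
  generalize ((∑ i, κ.1 i * lam.2 i) - (∑ i, κ.2 i * lam.1 i)) = k
  rcases Int.natAbs_eq k with h | h
  · conv_lhs => rw [h]
    rw [zpow_natCast]
  · conv_lhs => rw [h]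
    rw [zpow_neg, zpow_natCast, ← inv_pow]
    norm_num

lemma Xi6_of (d : Fin 10) (τ : Mat2) (k : Fin 9 → Fin 10) (s : Fin 3 → ℤ)
    (hk : ∀ m : Fin 3,
      addChar (addChar (νodd (triad d 0)) (νodd (triad d 1)))
        (νodd (triad d (⟨m.1 + 3, by omega⟩ : Fin 6))) = δev (k ⟨m.1, by omega⟩) ∧
      addChar (addChar (νodd (triad d 0)) (νodd (triad d 2)))
        (νodd (triad d (⟨m.1 + 3, by omega⟩ : Fin 6))) = δev (k ⟨m.1 + 3, by omega⟩) ∧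
      addChar (addChar (νodd (triad d 1)) (νodd (triad d 2)))
        (νodd (triad d (⟨m.1 + 3, by omega⟩ : Fin 6))) = δev (k ⟨m.1 + 6, by omega⟩))
    (hs : sgn (νodd (triad d 0)) (νodd (triad d 1)) = s 0 ∧
      sgn (νodd (triad d 0)) (νodd (triad d 2)) = s 1 ∧
      sgn (νodd (triad d 1)) (νodd (triad d 2)) = s 2) :
    Xi6 d τ =
      s 0 * (theta (δev (k 0)) τ ^ 4 * theta (δev (k 1)) τ ^ 4 * theta (δev (k 2)) τ ^ 4) +
      s 1 * (theta (δev (k 3)) τ ^ 4 * theta (δev (k 4)) τ ^ 4 * theta (δev (k 5)) τ ^ 4) +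
      s 2 * (theta (δev (k 6)) τ ^ 4 * theta (δev (k 7)) τ ^ 4 * theta (δev (k 8)) τ ^ 4) := by
  have c0 : Fin.castLE (show 3 ≤ 6 by norm_num) 0 = 0 := rfl
  have c1 : Fin.castLE (show 3 ≤ 6 by norm_num) 1 = 1 := rfl
  have c2 : Fin.castLE (show 3 ≤ 6 by norm_num) 2 = 2 := rfl
  have l01 : (0 : Fin 3) < 1 := by decide
  have l02 : (0 : Fin 3) < 2 := by decide
  have l12 : (1 : Fin 3) < 2 := by decide
  have n00 : ¬ (0 : Fin 3) < 0 := by decide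
  have n10 : ¬ (1 : Fin 3) < 0 := by decide
  have n11 : ¬ (1 : Fin 3) < 1 := by decide
  have n20 : ¬ (2 : Fin 3) < 0 := by decide
  have n21 : ¬ (2 : Fin 3) < 1 := by decide
  have n22 : ¬ (2 : Fin 3) < 2 := by decide
  rw [Xi6]
  simp only [Fin.sum_univ_three, c0, c1, c2, l01, l02, l12, n00, n10, n11, n20, n21, n22,
    if_true, if_false, sig_eq, hs, fun m => (hk m).1, fun m => (hk m).2.1, fun m => (hk m).2.2,
    Fin.prod_univ_three, zero_add, add_zero]
  rfl

/-- `Ξ₆[δ]` as linear combinations of the derivatives of the Igusa quartic. -/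
lemma Xi6_eq {τ : Mat2} (h : τ ∈ SiegelH2) (d : Fin 10) : Xi6 d τ =
    (![6 * dI4 0 τ + 2 * dI4 1 τ + 2 * dI4 2 τ + 2 * dI4 3 τ,
      6 * dI4 0 τ - 2 * dI4 1 τ + 2 * dI4 2 τ - 2 * dI4 3 τ,
      6 * dI4 0 τ + 2 * dI4 1 τ - 2 * dI4 2 τ - 2 * dI4 3 τ,
      6 * dI4 0 τ - 2 * dI4 1 τ - 2 * dI4 2 τ + 2 * dI4 3 τ,
      4 * dI4 1 τ + 2 * dI4 4 τ, 4 * dI4 1 τ - 2 * dI4 4 τ,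
      4 * dI4 2 τ + 2 * dI4 4 τ, 4 * dI4 2 τ - 2 * dI4 4 τ,
      4 * dI4 3 τ + 2 * dI4 4 τ, 4 * dI4 3 τ - 2 * dI4 4 τ] : Fin 10 → ℂ) d := by
  simp only [dI4_eq]
  fin_cases d
  · rw [Xi6_of _ τ ![4, 7, 3, 1, 8, 5, 9, 2, 6] ![-1, -1, -1] (by decide) (by decide)]
    simp [theta_four h]
    ring
  · rw [Xi6_of _ τ ![6, 4, 2, 8, 0, 5, 3, 9, 7] ![1, -1, 1] (by decide) (by decide)]
    simp [theta_four h]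
    ring
  · rw [Xi6_of _ τ ![6, 4, 1, 9, 3, 5, 0, 8, 7] ![1, 1, -1] (by decide) (by decide)]
    simp [theta_four h]
    ring
  · rw [Xi6_of _ τ ![4, 7, 0, 2, 9, 5, 8, 1, 6] ![-1, 1, 1] (by decide) (by decide)]
    simp [theta_four h]
    ring
  · rw [Xi6_of _ τ ![6, 2, 1, 7, 3, 0, 5, 8, 9] ![1, -1, 1] (by decide) (by decide)]
    simp [theta_four h]
    ring
  · rw [Xi6_of _ τ ![2, 9, 3, 1, 8, 0, 7, 4, 6] ![1, -1, 1] (by decide) (by decide)]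
    simp [theta_four h]
    ring
  · rw [Xi6_of _ τ ![4, 2, 1, 7, 9, 8, 5, 0, 3] ![1, 1, -1] (by decide) (by decide)]
    simp [theta_four h]
    ring
  · rw [Xi6_of _ τ ![6, 9, 8, 4, 3, 0, 5, 1, 2] ![1, -1, 1] (by decide) (by decide)]
    simp [theta_four h]
    ring
  · rw [Xi6_of _ τ ![6, 7, 9, 1, 0, 5, 3, 2, 4] ![1, -1, 1] (by decide) (by decide)]
    simp [theta_four h]
    ring
  · rw [Xi6_of _ τ ![6, 7, 8, 2, 3, 5, 0, 1, 4] ![1, 1, -1] (by decide) (by decide)]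
    simp [theta_four h]
    ring

lemma Θf_translate {τ : Mat2} (ε : Fin 2 → ℤ) (x y z : ℤ) :
    Θf ε (τ + !![(x : ℂ), y; y, z]) =
      Complex.I ^ (x * ε 0 ^ 2 + 2 * y * ε 0 * ε 1 + z * ε 1 ^ 2) * Θf ε τ := by
  rw [Θf, Θf, theta_eq, theta_eq, ← tsum_mul_left]
  refine tsum_congr fun n => ?_
  have hI : ∀ k : ℤ, Complex.I ^ k = Complex.exp (k * (Real.pi / 2 * Complex.I)) := by
    intro k
    rw [Complex.exp_int_mul, Complex.exp_pi_div_two_mul_I]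
  have h2 : Complex.exp (Real.pi * Complex.I * ((2 * (x * n 0 ^ 2 + 2 * y * n 0 * n 1 + z * n 1 ^ 2
      + x * n 0 * ε 0 + y * (n 0 * ε 1 + n 1 * ε 0) + z * n 1 * ε 1) : ℤ) : ℂ)) = 1 := by
    rw [exp_sign, zpow_mul]; simp
  rw [hI, ← one_mul (Complex.exp _ * _), ← h2]
  simp only [tm, ← Complex.exp_add]
  congr 1
  simp [Fin.sum_univ_two]
  ring

lemma translate_mem {τ : Mat2} (h : τ ∈ SiegelH2) (x y z : ℤ) :
    τ + !![(x : ℂ), y; y, z] ∈ SiegelH2 := by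
  obtain ⟨hs, h0, h1⟩ := mem_iff h
  apply mem_of
  · simp [hs]
  · simpa using h0
  · simpa using h1

/-- The special period matrix `i y [[2,1],[1,2]]`. -/
noncomputable def τs (y : ℝ) : Mat2 :=
  !![2 * Complex.I * y, Complex.I * y; Complex.I * y, 2 * Complex.I * y]

lemma τs_mem {y : ℝ} (hy : 0 < y) : τs y ∈ SiegelH2 := by
  apply mem_of
  · simp [τs]
  · simp [τs, hy]
  · simp [τs]; nlinarith

noncomputable def gr (ε : Fin 2 → ℤ) (y : ℝ) (n : Fin 2 → ℤ) : ℝ :=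
  Real.exp (-Real.pi * y * (4 * ((n 0 + ε 0 / 2 : ℝ) ^ 2 + (n 0 + ε 0 / 2 : ℝ) * (n 1 + ε 1 / 2 : ℝ)
    + (n 1 + ε 1 / 2 : ℝ) ^ 2)))

lemma tm_gr (ε : Fin 2 → ℤ) (y : ℝ) (n : Fin 2 → ℤ) :
    tm (ε, ![0, 0]) ((2 : ℂ) • τs y) n = (gr ε y n : ℂ) := by
  rw [tm, gr, Complex.ofReal_exp]
  congr 1
  simp [Fin.sum_univ_two, τs]
  linear_combination (4 * Real.pi * y * ((n 0 + ε 0 / 2 : ℂ) ^ 2 +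
    (n 0 + ε 0 / 2 : ℂ) * (n 1 + ε 1 / 2 : ℂ)
    + (n 1 + ε 1 / 2 : ℂ) ^ 2)) * Complex.I_sq

lemma gr_summable (ε : Fin 2 → ℤ) {y : ℝ} (hy : 0 < y) : Summable (gr ε y) := by
  have := summable_tm (two_smul_mem (τs_mem hy)) (ε, ![0, 0])
  refine this.congr fun n => ?_
  rw [tm_gr, Complex.norm_real, Real.norm_of_nonneg (show 0 ≤ gr ε y n from (Real.exp_pos _).le)]

lemma Θf_gr (ε : Fin 2 → ℤ) (y : ℝ) : Θf ε (τs y) = ((∑' n, gr ε y n : ℝ) : ℂ) := by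
  rw [Θf, theta_eq, Complex.ofReal_tsum]
  exact tsum_congr fun n => tm_gr _ _ _

lemma gr_01 (y : ℝ) : ∑' n, gr ![0, 1] y n = ∑' n, gr ![1, 0] y n := by
  let e : (Fin 2 → ℤ) ≃ (Fin 2 → ℤ) :=
    { toFun := fun n => ![n 1, n 0]
      invFun := fun n => ![n 1, n 0]
      left_inv := fun n => by ext i; fin_cases i <;> simp
      right_inv := fun n => by ext i; fin_cases i <;> simp }
  rw [← e.tsum_eq]
  refine tsum_congr fun n => ?_
  simp [gr, e]
  left
  ring

lemma gr_11 (y : ℝ) : ∑' n, gr ![1, 1] y n = ∑' n, gr ![1, 0] y n := by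
  let e : (Fin 2 → ℤ) ≃ (Fin 2 → ℤ) :=
    { toFun := fun n => ![n 0 + n 1, - n 0 - 1]
      invFun := fun n => ![- n 1 - 1, n 0 + n 1 + 1]
      left_inv := fun n => by ext i; fin_cases i <;> simp <;> ring
      right_inv := fun n => by ext i; fin_cases i <;> simp <;> ring }
  rw [← e.tsum_eq]
  refine tsum_congr fun n => ?_
  simp [gr, e]
  left
  ring

lemma exists_point : ∃ y s t : ℝ, 0 < y ∧ 0 < t ∧ t < s ∧ Θf ![0, 0] (τs y) = s ∧
    Θf ![0, 1] (τs y) = t ∧ Θf ![1, 0] (τs y) = t ∧ Θf ![1, 1] (τs y) = t := by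
  set t₁ := ∑' n, gr ![1, 0] 1 n with ht₁
  have hpos : ∀ y, 0 < y → 0 < ∑' n, gr ![1, 0] y n := fun y hy =>
    (gr_summable _ hy).tsum_pos (fun _ => (Real.exp_pos _).le) 0 (Real.exp_pos _)
  have h1 : 0 < t₁ := hpos 1 one_pos
  have hy : 0 < 1 + t₁ := by positivity
  refine ⟨1 + t₁, ∑' n, gr ![0, 0] (1 + t₁) n, ∑' n, gr ![1, 0] (1 + t₁) n, hy, hpos _ hy, ?_,
    Θf_gr _ _, ?_, Θf_gr _ _, ?_⟩
  · have hs : 1 ≤ ∑' n, gr ![0, 0] (1 + t₁) n := by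
      have := (gr_summable ![0, 0] hy).le_tsum 0 (fun _ _ => (Real.exp_pos _).le)
      simpa [gr] using this
    have ht : ∑' n, gr ![1, 0] (1 + t₁) n ≤ Real.exp (-Real.pi * t₁) * t₁ := by
      rw [ht₁, ← tsum_mul_left]
      refine (gr_summable _ hy).tsum_le_tsum (fun n => ?_) ((gr_summable _ one_pos).mul_left _)
      rw [← ht₁, gr, gr, ← Real.exp_add, Real.exp_le_exp]
      have hq : (1 : ℝ) ≤ 4 * ((n 0 + (![1, 0] : Fin 2 → ℤ) 0 / 2 : ℝ) ^ 2 +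
          (n 0 + (![1, 0] : Fin 2 → ℤ) 0 / 2 : ℝ) * (n 1 + (![1, 0] : Fin 2 → ℤ) 1 / 2 : ℝ)
          + (n 1 + (![1, 0] : Fin 2 → ℤ) 1 / 2 : ℝ) ^ 2) := by
        have hz : (1 : ℤ) ≤ (2 * n 0 + 1 + n 1) ^ 2 + 3 * n 1 ^ 2 := by
          by_cases h : n 1 = 0
          · rw [h]
            have : 2 * n 0 + 1 ≠ 0 := by omega
            have := pow_pos (abs_pos.2 this) 2
            rw [sq_abs] at this
            simp only [add_zero]
            omega
          · have := pow_pos (abs_pos.2 h) 2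
            rw [sq_abs] at this
            nlinarith [sq_nonneg (2 * n 0 + 1 + n 1)]
        have hr : (1 : ℝ) ≤ (2 * n 0 + 1 + n 1 : ℝ) ^ 2 + 3 * (n 1 : ℝ) ^ 2 := by exact_mod_cast hz
        simp
        nlinarith
      set Q := 4 * ((n 0 + (![1, 0] : Fin 2 → ℤ) 0 / 2 : ℝ) ^ 2 +
          (n 0 + (![1, 0] : Fin 2 → ℤ) 0 / 2 : ℝ) * (n 1 + (![1, 0] : Fin 2 → ℤ) 1 / 2 : ℝ)
          + (n 1 + (![1, 0] : Fin 2 → ℤ) 1 / 2 : ℝ) ^ 2)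
      have := mul_le_mul_of_nonneg_left hq (mul_pos Real.pi_pos h1).le
      nlinarith
    have hlt : Real.exp (-Real.pi * t₁) * t₁ < 1 := by
      have e : Real.exp (-Real.pi * t₁) = (Real.exp (Real.pi * t₁))⁻¹ := by
        rw [← Real.exp_neg]; ring_nf
      rw [e, inv_mul_lt_iff₀ (Real.exp_pos _), mul_one]
      have := Real.add_one_le_exp (Real.pi * t₁)
      nlinarith [Real.pi_gt_three]
    linarith
  · rw [Θf_gr, gr_01]
  · rw [Θf_gr, gr_11]

lemma dI4_translate {τ : Mat2} (i : Fin 5) :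
    dI4 i (τ + !![((1 : ℤ) : ℂ), (0 : ℤ); (0 : ℤ), (0 : ℤ)]) = (![1, 1, -1, -1, -1] : Fin 5 → ℂ) i * dI4 i τ ∧
    dI4 i (τ + !![((0 : ℤ) : ℂ), (0 : ℤ); (0 : ℤ), (1 : ℤ)]) = (![1, -1, 1, -1, -1] : Fin 5 → ℂ) i * dI4 i τ ∧
    dI4 i (τ + !![((0 : ℤ) : ℂ), (1 : ℤ); (1 : ℤ), (0 : ℤ)]) = (![1, 1, 1, 1, -1] : Fin 5 → ℂ) i * dI4 i τ ∧
    dI4 i (τ + !![((1 : ℤ) : ℂ), (0 : ℤ); (0 : ℤ), (1 : ℤ)]) = (![1, -1, -1, 1, 1] : Fin 5 → ℂ) i * dI4 i τ := by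
  have h2 : Complex.I ^ (2 : ℤ) = -1 := by
    have : (2 : ℤ) = ((2 : ℕ) : ℤ) := rfl
    rw [this, zpow_natCast, Complex.I_sq]
  have h4 : Complex.I ^ 4 = 1 := Complex.I_pow_four
  have key : ∀ x y z : ℤ, ∀ a b c : ℂ, a = Complex.I ^ z → b = Complex.I ^ x →
      c = Complex.I ^ (x + 2 * y + z) → ∀ τ : Mat2,
      P0 (τ + !![(x : ℂ), y; y, z]) = Θf ![0, 0] τ ^ 4 + (a * Θf ![0, 1] τ) ^ 4 +
        (b * Θf ![1, 0] τ) ^ 4 + (c * Θf ![1, 1] τ) ^ 4 ∧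
      P1 (τ + !![(x : ℂ), y; y, z]) = 2 * (Θf ![0, 0] τ ^ 2 * (a * Θf ![0, 1] τ) ^ 2 +
        (b * Θf ![1, 0] τ) ^ 2 * (c * Θf ![1, 1] τ) ^ 2) ∧
      P2 (τ + !![(x : ℂ), y; y, z]) = 2 * (Θf ![0, 0] τ ^ 2 * (b * Θf ![1, 0] τ) ^ 2 +
        (a * Θf ![0, 1] τ) ^ 2 * (c * Θf ![1, 1] τ) ^ 2) ∧
      P3 (τ + !![(x : ℂ), y; y, z]) = 2 * (Θf ![0, 0] τ ^ 2 * (c * Θf ![1, 1] τ) ^ 2 +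
        (a * Θf ![0, 1] τ) ^ 2 * (b * Θf ![1, 0] τ) ^ 2) ∧
      P4 (τ + !![(x : ℂ), y; y, z]) = 4 * (Θf ![0, 0] τ * (a * Θf ![0, 1] τ) *
        (b * Θf ![1, 0] τ) * (c * Θf ![1, 1] τ)) := by
    rintro x y z a b c rfl rfl rfl τ
    refine ⟨?_, ?_, ?_, ?_, ?_⟩ <;> simp [P0, P1, P2, P3, P4, Θf_translate]
  have hP : ∀ x y z : ℤ, ∀ a b c : ℂ, a = Complex.I ^ z → b = Complex.I ^ x →
      c = Complex.I ^ (x + 2 * y + z) → ∀ τ : Mat2, ∀ s1 s2 s3 s4 : ℂ,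
      a ^ 4 = 1 → b ^ 4 = 1 → c ^ 4 = 1 → a ^ 2 = s1 → b ^ 2 * c ^ 2 = s1 → b ^ 2 = s2 →
      a ^ 2 * c ^ 2 = s2 → c ^ 2 = s3 → a ^ 2 * b ^ 2 = s3 → a * b * c = s4 →
      P0 (τ + !![(x : ℂ), y; y, z]) = P0 τ ∧ P1 (τ + !![(x : ℂ), y; y, z]) = s1 * P1 τ ∧
      P2 (τ + !![(x : ℂ), y; y, z]) = s2 * P2 τ ∧ P3 (τ + !![(x : ℂ), y; y, z]) = s3 * P3 τ ∧
      P4 (τ + !![(x : ℂ), y; y, z]) = s4 * P4 τ := by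
    intro x y z a b c ha hb hc τ s1 s2 s3 s4 e1 e2 e3 e4 e5 e6 e7 e8 e9 e10
    obtain ⟨k0, k1, k2, k3, k4⟩ := key x y z a b c ha hb hc τ
    rw [k0, k1, k2, k3, k4, P0, P1, P2, P3, P4]
    refine ⟨?_, ?_, ?_, ?_, ?_⟩
    · simp only [mul_pow, e1, e2, e3, one_mul]
    · linear_combination 2 * Θf ![0, 0] τ ^ 2 * Θf ![0, 1] τ ^ 2 * e4 +
        2 * Θf ![1, 0] τ ^ 2 * Θf ![1, 1] τ ^ 2 * e5
    · linear_combination 2 * Θf ![0, 0] τ ^ 2 * Θf ![1, 0] τ ^ 2 * e6 +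
        2 * Θf ![0, 1] τ ^ 2 * Θf ![1, 1] τ ^ 2 * e7
    · linear_combination 2 * Θf ![0, 0] τ ^ 2 * Θf ![1, 1] τ ^ 2 * e8 +
        2 * Θf ![0, 1] τ ^ 2 * Θf ![1, 0] τ ^ 2 * e9
    · linear_combination 4 * Θf ![0, 0] τ * Θf ![0, 1] τ * Θf ![1, 0] τ * Θf ![1, 1] τ * e10
  have A := hP 1 0 0 1 Complex.I Complex.I (by simp) (by simp) (by simp) τ 1 (-1) (-1) (-1)
    (by simp) (by simp) (by simp) (by simp) (by simp) (by simp) (by simp) (by simp) (by simp)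
    (by simp)
  have B := hP 0 0 1 Complex.I 1 Complex.I (by simp) (by simp) (by simp) τ (-1) 1 (-1) (-1)
    (by simp) (by simp) (by simp) (by simp) (by simp) (by simp) (by simp) (by simp) (by simp)
    (by simp)
  have C := hP 0 1 0 1 1 (-1) (by simp) (by simp) (by simp [h2]) τ 1 1 1 (-1)
    (by simp) (by simp) (by norm_num) (by simp) (by simp) (by simp) (by simp) (by simp) (by simp)
    (by simp)
  have D := hP 1 0 1 Complex.I Complex.I (-1) (by simp) (by simp) (by simp [h2]) τ (-1) (-1) 1 1
    (by simp) (by simp) (by norm_num) (by simp) (by simp) (by simp) (by simp) (by simp) (by simp)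
    (by simp)
  obtain ⟨A0, A1, A2, A3, A4⟩ := A
  obtain ⟨B0, B1, B2, B3, B4⟩ := B
  obtain ⟨C0, C1, C2, C3, C4⟩ := C
  obtain ⟨D0, D1, D2, D3, D4⟩ := D
  refine ⟨?_, ?_, ?_, ?_⟩
  · rw [dI4_eq, dI4_eq, A0, A1, A2, A3, A4]
    fin_cases i <;> simp <;> ring
  · rw [dI4_eq, dI4_eq, B0, B1, B2, B3, B4]
    fin_cases i <;> simp <;> ring
  · rw [dI4_eq, dI4_eq, C0, C1, C2, C3, C4]
    fin_cases i <;> simp <;> ring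
  · rw [dI4_eq, dI4_eq, D0, D1, D2, D3, D4]
    fin_cases i <;> simp <;> ring

lemma exists_nonzero : ∃ τ ∈ SiegelH2, ∀ i, dI4 i τ ≠ 0 := by
  obtain ⟨y, s, t, hy, ht, hst, h00, h01, h10, h11⟩ := exists_point
  refine ⟨τs y, τs_mem hy, ?_⟩
  have hd : (s ^ 2 - t ^ 2 : ℂ) ≠ 0 := by
    have : s ^ 2 - t ^ 2 ≠ 0 := by nlinarith
    exact_mod_cast this
  have hs0 : (s : ℂ) ≠ 0 := by
    have : s ≠ 0 := by linarith
    exact_mod_cast this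
  have ht0 : (t : ℂ) ≠ 0 := by exact_mod_cast ht.ne'
  have h3 : (s ^ 2 + 3 * t ^ 2 : ℂ) ≠ 0 := by
    have : s ^ 2 + 3 * t ^ 2 ≠ 0 := by positivity
    exact_mod_cast this
  have hp : (s ^ 2 + t ^ 2 : ℂ) ≠ 0 := by
    have : s ^ 2 + t ^ 2 ≠ 0 := by positivity
    exact_mod_cast this
  have e1 : 16 * (t ^ 2 : ℂ) ^ 3 * (s ^ 2 - t ^ 2 : ℂ) ^ 3 ≠ 0 := by
    simp [hd, ht0]
  have e2 : -8 * (t ^ 2 : ℂ) ^ 2 * (s ^ 2 + t ^ 2 : ℂ) * (s ^ 2 - t ^ 2 : ℂ) ^ 3 ≠ 0 := by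
    simp [hd, ht0, hp]
  have e3 : 8 * s * (t : ℂ) ^ 3 * (s ^ 2 + 3 * t ^ 2 : ℂ) * (s ^ 2 - t ^ 2 : ℂ) ^ 3 ≠ 0 := by
    simp [hd, ht0, hs0, h3]
  intro i
  rw [dI4_eq]
  simp only [P0, P1, P2, P3, P4, h00, h01, h10, h11]
  fin_cases i
  · convert e1 using 1
    simp; ring
  · convert e2 using 1
    simp; ring
  · convert e2 using 1
    simp; ring
  · convert e2 using 1
    simp; ring
  · convert e3 using 1
    simp; ring

lemma dI4_linearIndependent :
    LinearIndependent ℂ (fun i : Fin 5 => fun τ : SiegelH2 => dI4 i τ.1) := by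
  rw [Fintype.linearIndependent_iff]
  intro g hg
  obtain ⟨τ, hτ, hne⟩ := exists_nonzero
  have ev : ∀ σ ∈ SiegelH2, g 0 * dI4 0 σ + g 1 * dI4 1 σ + g 2 * dI4 2 σ + g 3 * dI4 3 σ +
      g 4 * dI4 4 σ = 0 := by
    intro σ hσ
    have := congrFun hg ⟨σ, hσ⟩
    simpa [Fin.sum_univ_five] using this
  have q0 := ev τ hτ
  have q1 := ev _ (translate_mem hτ 1 0 0)
  have q2 := ev _ (translate_mem hτ 0 0 1)
  have q3 := ev _ (translate_mem hτ 0 1 0)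
  have q4 := ev _ (translate_mem hτ 1 0 1)
  simp only [(dI4_translate _).1] at q1
  simp only [(dI4_translate _).2.1] at q2
  simp only [(dI4_translate _).2.2.1] at q3
  simp only [(dI4_translate _).2.2.2] at q4
  simp at q1 q2 q3 q4
  have r4 : g 4 * dI4 4 τ = 0 := by linear_combination (1 / 2) * q0 - (1 / 2) * q3
  have r0 : g 0 * dI4 0 τ = 0 := by
    linear_combination (1 / 4) * (q0 + q1 + q2 + q4)
  have r1 : g 1 * dI4 1 τ = 0 := by
    linear_combination (1 / 4) * (q0 + q1 - q2 - q4)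
  have r2 : g 2 * dI4 2 τ = 0 := by
    linear_combination (1 / 4) * (q0 - q1 + q2 - q4)
  have r3 : g 3 * dI4 3 τ = 0 := by
    linear_combination (1 / 4) * (q0 - q1 - q2 + q4) - r4
  intro i
  fin_cases i
  · exact (mul_eq_zero.1 r0).resolve_right (hne 0)
  · exact (mul_eq_zero.1 r1).resolve_right (hne 1)
  · exact (mul_eq_zero.1 r2).resolve_right (hne 2)
  · exact (mul_eq_zero.1 r3).resolve_right (hne 3)
  · exact (mul_eq_zero.1 r4).resolve_right (hne 4)

lemma span_eq :
    Submodule.span ℂ (Set.range fun d : Fin 10 => fun τ : SiegelH2 => Xi6 d τ.1)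
      = Submodule.span ℂ (Set.range fun i : Fin 5 => fun τ : SiegelH2 => dI4 i τ.1) := by
  apply le_antisymm
  · rw [Submodule.span_le]
    rintro _ ⟨d, rfl⟩
    rw [SetLike.mem_coe, Submodule.mem_span_range_iff_exists_fun]
    refine ⟨(![![6, 2, 2, 2, 0], ![6, -2, 2, -2, 0], ![6, 2, -2, -2, 0], ![6, -2, -2, 2, 0],
      ![0, 4, 0, 0, 2], ![0, 4, 0, 0, -2], ![0, 0, 4, 0, 2], ![0, 0, 4, 0, -2],
      ![0, 0, 0, 4, 2], ![0, 0, 0, 4, -2]] : Fin 10 → Fin 5 → ℂ) d, ?_⟩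
    ext τ
    simp only [Xi6_eq τ.2]
    fin_cases d <;> simp [Fin.sum_univ_five] <;> ring
  · rw [Submodule.span_le]
    rintro _ ⟨i, rfl⟩
    rw [SetLike.mem_coe, Submodule.mem_span_range_iff_exists_fun]
    refine ⟨(![![1/24, 1/24, 1/24, 1/24, 0, 0, 0, 0, 0, 0], ![1/8, -1/8, 1/8, -1/8, 0, 0, 0, 0, 0, 0],
      ![1/8, 1/8, -1/8, -1/8, 0, 0, 0, 0, 0, 0], ![1/8, -1/8, -1/8, 1/8, 0, 0, 0, 0, 0, 0],
      ![0, 0, 0, 0, 1/4, -1/4, 0, 0, 0, 0]] : Fin 5 → Fin 10 → ℂ) i, ?_⟩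
    ext τ
    simp only [Finset.sum_apply, Pi.smul_apply, Xi6_eq τ.2, smul_eq_mul]
    fin_cases i <;> simp [Fin.sum_univ_succ] <;> ring

/-- `V_Ξ` equals the span of the five derivatives of the Igusa quartic,
and this common span has dimension exactly 5. -/
theorem statement6 :
    Submodule.span ℂ (Set.range fun d : Fin 10 => fun τ : SiegelH2 => Xi6 d τ.1)
      = Submodule.span ℂ (Set.range fun i : Fin 5 => fun τ : SiegelH2 => dI4 i τ.1) ∧
    Module.finrank ℂ ↥(Submodule.span ℂ
      (Set.range fun d : Fin 10 => fun τ : SiegelH2 => Xi6 d τ.1)) = 5 := by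
  refine ⟨span_eq, ?_⟩
  rw [span_eq, finrank_span_eq_card dI4_linearIndependent]
  simp

end TwoLoop
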